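/- arXiv:2407.04635 — 7 statements merged into one kernel-verified Lean document; each statement's English description precedes it below -/
import Mathlib

section
/- The map g(x,y,t) = (x e^{-y}, e^{y}, (t - 2xy + 4x)/2) satisfies the global contact property g*ϑ = (1/(4e^{y})) ϑ_ℍ: for every p = (x,y,t) ∈ ℝ³ and every v = (v_x, v_y, v_t) ∈ ℝ³, writing w = Dg(p)(v) ∈ ℝ³ and (a,λ,τ) = g(p), one has w_t/(2λ) - w_a = (1/(4e^{y})) (v_t + 2x v_y - 2y v_x). In particular, the factor 1/(4e^{y}) is a nowhere vanishing smooth function, so g is a global contactomorphism from the Heisenberg group to the affine-additive group. -/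
/-!
The pullback identity is a direct computation: `fderiv_g_apply` gives `Dg(p)(v)` in coordinates
(chain and product rules), and since `λ = e^y` and `e^{-y} = 4 / (4e^y)`, the difference
`w_t/(2λ) - w_a` has the common denominator `4e^y`; the terms `4 v_x` cancel and
`-2x v_y + 4x v_y = 2x v_y`.
-/

/-- The map `g(x,y,t) = (x e^{-y}, e^{y}, (t - 2xy + 4x)/2)` from the Heisenberg group
to the affine-additive group. -/
noncomputable def g (p : ℝ × ℝ × ℝ) : ℝ × ℝ × ℝ :=
  (p.1 * Real.exp (-p.2.1), Real.exp p.2.1, (p.2.2 - 2 * p.1 * p.2.1 + 4 * p.1) / 2)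

/-- The total derivative of `g` at `(x,y,t)` applied to `v`, in coordinates. -/
theorem fderiv_g_apply (p v : ℝ × ℝ × ℝ) :
    fderiv ℝ g p v =
      (Real.exp (-p.2.1) * (v.1 - p.1 * v.2.1), Real.exp p.2.1 * v.2.1,
        (v.2.2 - 2 * (p.1 * v.2.1 + p.2.1 * v.1) + 4 * v.1) / 2) := by
  have hx : HasFDerivAt (fun q : ℝ × ℝ × ℝ => q.1) (ContinuousLinearMap.fst ℝ ℝ (ℝ × ℝ)) p :=
    hasFDerivAt_fst
  have hyt : HasFDerivAt (fun q : ℝ × ℝ × ℝ => q.2) (ContinuousLinearMap.snd ℝ ℝ (ℝ × ℝ)) p :=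
    hasFDerivAt_snd
  have hy := hyt.fst
  have ht := hyt.snd
  have hg : HasFDerivAt g _ p :=
    (hx.mul hy.neg.exp).prodMk (hy.exp.prodMk
      (((ht.sub ((hx.const_mul 2).mul hy)).add (hx.const_mul 4)).mul_const (2⁻¹ : ℝ)))
  rw [hg.fderiv]
  ext <;> simp <;> ring

/-- The global contact property `g*ϑ = (1/(4e^y)) ϑ_ℍ`: for every `p = (x,y,t)` and every
vector `v = (v_x,v_y,v_t)`, writing `w = Dg(p)(v)` and `(a,λ,τ) = g(p)`, one has
`w_t/(2λ) - w_a = (1/(4e^y)) (v_t + 2x v_y - 2y v_x)`; the factor `1/(4e^y)` never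
vanishes, so `g` is a global contactomorphism from `ℍ` to `AA`. -/
theorem stmt6 (p v : ℝ × ℝ × ℝ) :
    (fderiv ℝ g p v).2.2 / (2 * (g p).2.1) - (fderiv ℝ g p v).1 =
      (1 / (4 * Real.exp p.2.1)) * (v.2.2 + 2 * p.1 * v.2.1 - 2 * p.2.1 * v.1) ∧
    (1 / (4 * Real.exp p.2.1)) ≠ 0 := by
  have he : Real.exp p.2.1 ≠ 0 := Real.exp_ne_zero _
  refine ⟨?_, by positivity⟩
  rw [fderiv_g_apply]
  simp only [g, Real.exp_neg]
  field_simp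
  ring
end

section
/- The pushforward under g of the measure on ℝ³ with density (1/2) e^{-2y} with respect to Lebesgue measure equals μ_AA; that is, for every Borel set A ⊆ ℝ × (0,∞) × ℝ, μ_AA(A) = ∫_{g^{-1}(A)} (1/2) e^{-2y} dx dy dt. Equivalently, g pulls back the left Haar measure μ_AA of the affine-additive group to a measure absolutely continuous with respect to Lebesgue measure on the Heisenberg group with smooth positive density (1/2) e^{-2y}. -/
/-!
The map `g` is a smooth injection with image the half-space `{λ > 0}`, and its Jacobian determinant
is constantly `e^{-y} · e^{y} · 1/2 = 1/2`. Since the density `λ⁻²` composed with `g` is `e^{-2y}`,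
the change of variables formula on `g ⁻¹' A` gives
`μ_AA(A) = ∫_{g⁻¹(A)} (1/2) e^{-2y}` for every Borel set `A`.
-/

open MeasureTheory

/-- The left Haar measure of the affine-additive group: Lebesgue measure restricted to
`ℝ × (0,∞) × ℝ` with density `λ⁻²`. -/
noncomputable def muAA : Measure (ℝ × ℝ × ℝ) :=
  (volume.restrict {p : ℝ × ℝ × ℝ | 0 < p.2.1}).withDensity
    fun p => ENNReal.ofReal (p.2.1⁻¹ ^ 2)

/-- The coordinate equivalence `ℝ × ℝ × ℝ ≃ ℝ³`, used to compute determinants as those of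
`3 × 3` matrices. -/
noncomputable def coordEquiv : (ℝ × ℝ × ℝ) ≃ₗ[ℝ] (Fin 3 → ℝ) where
  toFun p := ![p.1, p.2.1, p.2.2]
  invFun v := (v 0, v 1, v 2)
  map_add' p q := by ext i; fin_cases i <;> simp
  map_smul' c p := by ext i; fin_cases i <;> simp
  left_inv p := by simp
  right_inv v := by ext i; fin_cases i <;> simp

/-- The Fréchet derivative of `g` at `p`. -/
noncomputable def gDeriv (p : ℝ × ℝ × ℝ) : (ℝ × ℝ × ℝ) →L[ℝ] (ℝ × ℝ × ℝ) :=
  let dx := ContinuousLinearMap.fst ℝ ℝ (ℝ × ℝ)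
  let dy := (ContinuousLinearMap.fst ℝ ℝ ℝ).comp (ContinuousLinearMap.snd ℝ ℝ (ℝ × ℝ))
  let dt := (ContinuousLinearMap.snd ℝ ℝ ℝ).comp (ContinuousLinearMap.snd ℝ ℝ (ℝ × ℝ))
  (Real.exp (-p.2.1) • dx - (p.1 * Real.exp (-p.2.1)) • dy).prod
    ((Real.exp p.2.1 • dy).prod
      ((2 - p.2.1) • dx - p.1 • dy + (1 / 2 : ℝ) • dt))

lemma hasFDerivAt_g (p : ℝ × ℝ × ℝ) : HasFDerivAt g (gDeriv p) p := by
  have hx : HasFDerivAt (fun q : ℝ × ℝ × ℝ => q.1) (ContinuousLinearMap.fst ℝ ℝ (ℝ × ℝ)) p :=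
    hasFDerivAt_fst
  have hyt : HasFDerivAt (fun q : ℝ × ℝ × ℝ => q.2) (ContinuousLinearMap.snd ℝ ℝ (ℝ × ℝ)) p :=
    hasFDerivAt_snd
  have hy := hyt.fst
  have ht := hyt.snd
  have h1 := hx.mul hy.neg.exp
  have h3 := ((ht.sub ((hx.const_mul 2).mul hy)).add (hx.const_mul 4)).mul_const (1 / 2 : ℝ)
  have h := h1.prodMk (hy.exp.prodMk h3)
  refine (h.congr_fderiv ?_).congr_of_eventuallyEq (Filter.Eventually.of_forall fun q => ?_)
  · refine ContinuousLinearMap.ext fun v => ?_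
    simp [gDeriv]
    constructor <;> ring
  · simp [g, div_eq_mul_inv]

lemma det_gDeriv (p : ℝ × ℝ × ℝ) : (gDeriv p).det = 1 / 2 := by
  rw [ContinuousLinearMap.det, ← LinearMap.det_toMatrix (Module.Basis.ofEquivFun coordEquiv),
    Matrix.det_fin_three]
  simp [LinearMap.toMatrix_apply, coordEquiv, gDeriv, ← Real.exp_add]

lemma injective_g : Function.Injective g := by
  rintro ⟨x, y, t⟩ ⟨x', y', t'⟩ h
  simp only [g, Prod.mk.injEq] at h
  obtain ⟨h1, h2, h3⟩ := h
  obtain rfl := Real.exp_injective h2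
  obtain rfl := mul_right_cancel₀ (Real.exp_ne_zero _) h1
  simp only [Prod.mk.injEq, true_and]
  linarith

lemma range_g : Set.range g = {p : ℝ × ℝ × ℝ | 0 < p.2.1} := by
  ext ⟨a, l, s⟩
  constructor
  · rintro ⟨p, hp⟩
    rw [← hp]
    exact Real.exp_pos _
  · intro hl
    have hl : 0 < l := hl
    refine ⟨(a * l, Real.log l, 2 * s + 2 * (a * l) * Real.log l - 4 * (a * l)), ?_⟩
    simp only [g, Real.exp_neg, Real.exp_log hl, Prod.mk.injEq, true_and]
    exact ⟨by field_simp, by ring⟩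

lemma measurable_g : Measurable g := by
  unfold g
  fun_prop

/-- The pushforward under `g` of the measure `(1/2) e^{-2y} dx dy dt` on `ℝ³` equals the
left Haar measure `μ_AA`: `g` pulls back `μ_AA` to a measure with smooth positive density
`(1/2) e^{-2y}` with respect to Lebesgue measure on the Heisenberg group. -/
theorem stmt8 :
    Measure.map g
      (volume.withDensity fun p : ℝ × ℝ × ℝ =>
        ENNReal.ofReal ((1 / 2) * Real.exp (-2 * p.2.1))) = muAA := by
  ext A hA
  -- `volume` on the product is definitionally the product of the two Lebesgue measures.
  have : (volume : Measure (ℝ × ℝ × ℝ)).IsAddHaarMeasure :=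
    Measure.prod.instIsAddHaarMeasure volume volume
  have hpre : MeasurableSet (g ⁻¹' A) := measurable_g hA
  rw [Measure.map_apply measurable_g hA, withDensity_apply _ hpre, muAA, withDensity_apply _ hA,
    Measure.restrict_restrict hA, ← range_g, ← Set.image_preimage_eq_inter_range,
    lintegral_image_eq_lintegral_abs_det_fderiv_mul volume hpre
      (fun p _ => (hasFDerivAt_g p).hasFDerivWithinAt) injective_g.injOn]
  refine lintegral_congr fun p => ?_
  rw [det_gDeriv, ← ENNReal.ofReal_mul (abs_nonneg _), abs_of_pos one_half_pos]
  congr 2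
  simp only [g]
  rw [← Real.exp_neg, ← Real.exp_nat_mul]
  congr 1
  push_cast
  ring
end

section
/- Fix an integer n ≥ 2 and let ρ : ℝ³ → [0,∞] be a Borel function. Suppose that for every a ∈ [-1,1] and every t ∈ [-1,1] the admissibility condition ∫₀¹ ρ(a, 1-(1-1/n)s, t) · ((1-1/n) / (2(1-(1-1/n)s))) ds ≥ 1 holds (this is the line integral of ρ along the horizontal curve γ(s) = (a, 1-(1-1/n)s, t) with respect to its horizontal speed |γ̇(s)|_H = (1-1/n)/(2(1-(1-1/n)s))). Then ∫_{ℝ × (0,∞) × ℝ} ρ(a,λ,t)⁴ λ⁻² da dλ dt ≥ 2⁴/3³ = 16/27. In particular, the 4-modulus of the family of horizontal curves joining E = {(a,1,t) : a,t ∈ [-1,1]} to F_n = {(a,1/n,t) : a,t ∈ [-1,1]} in the affine-additive group is at least 16/27, uniformly in n. -/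
/-!
On the vertical segment over `(a, t)` the substitution `x = 1 - (1 - 1/n) s` turns admissibility into
`2 ≤ ∫_{1/n}^1 ρ(a, x, t) x⁻¹ dx`. Writing `ρ x⁻¹ = (ρ x^(-1/2)) · x^(-1/2)`, Hölder's inequality with
exponents `4` and `4/3` gives `16 ≤ (∫ ρ⁴ x⁻² dx) (∫_{1/n}^1 x^(-2/3) dx)³ ≤ 27 ∫ ρ⁴ x⁻² dx`
(`fibre_bound`). Integrating this over the square `(a, t) ∈ [-1,1]²`, of area `4 ≥ 1`, with Tonelli's
theorem concludes.
-/

open MeasureTheory ENNReal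

lemma lintegral_rpow_neg_two_thirds_le (ε : ℝ) (hε : 0 < ε) (hε1 : ε ≤ 1) :
    ∫⁻ x in Set.Icc ε 1, ENNReal.ofReal (x ^ (-(2 / 3) : ℝ)) ≤ 3 := by
  have hint : IntegrableOn (fun x : ℝ => x ^ (-(2 / 3) : ℝ)) (Set.Icc ε 1) := by
    apply ContinuousOn.integrableOn_compact isCompact_Icc
    intro x hx
    exact (Real.continuousAt_rpow_const x _ (Or.inl (by linarith [hx.1]))).continuousWithinAt
  rw [← ofReal_integral_eq_lintegral_ofReal hint]
  · rw [integral_Icc_eq_integral_Ioc, ← intervalIntegral.integral_of_le hε1,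
      integral_rpow (Or.inl (by norm_num))]
    have h : 0 ≤ ε ^ (-(2 / 3) + 1 : ℝ) := Real.rpow_nonneg hε.le _
    apply ENNReal.ofReal_le_of_le_toReal
    rw [Real.one_rpow]
    norm_num at h ⊢
    linarith
  · filter_upwards [ae_restrict_mem measurableSet_Icc] with x hx
    exact Real.rpow_nonneg (by linarith [hx.1]) _

/-- Substitution `x = 1 - (1 - ε) s`, clearing the factor `1/2` of the horizontal speed. -/
lemma two_le_of_admissible (ε : ℝ) (hε : 0 < ε) (hε1 : ε < 1) (g : ℝ → ℝ≥0∞)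
    (adm : 1 ≤ ∫⁻ s in Set.Icc (0 : ℝ) 1, g (1 - (1 - ε) * s) *
          ENNReal.ofReal ((1 - ε) / (2 * (1 - (1 - ε) * s)))) :
    2 ≤ ∫⁻ x in Set.Icc ε 1, g x * ENNReal.ofReal x⁻¹ := by
  have hc : 0 < 1 - ε := by linarith
  have himg : (fun s : ℝ => 1 - (1 - ε) * s) '' Set.Icc 0 1 = Set.Icc ε 1 := by
    ext x
    constructor
    · rintro ⟨s, hs, rfl⟩
      constructor <;> dsimp only <;> nlinarith [hs.1, hs.2]
    · intro hx
      refine ⟨(1 - x) / (1 - ε), ⟨div_nonneg (by linarith [hx.2]) hc.le, ?_⟩, ?_⟩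
      · rw [div_le_one hc]; linarith [hx.1]
      · field_simp; ring
  have hcv := lintegral_image_eq_lintegral_abs_deriv_mul (s := Set.Icc (0 : ℝ) 1)
    (f := fun s : ℝ => 1 - (1 - ε) * s) (f' := fun _ => -(1 - ε)) measurableSet_Icc
    (fun s _ => by
      simpa using (((hasDerivAt_id s).const_mul (1 - ε)).const_sub 1).hasDerivWithinAt)
    (fun s _ s' _ h => by
      have h' : (1 - ε) * s = (1 - ε) * s' := by dsimp only at h; linarith
      exact mul_left_cancel₀ hc.ne' h')
    (fun x => g x * ENNReal.ofReal x⁻¹)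
  rw [himg] at hcv
  rw [hcv]
  calc (2 : ℝ≥0∞) = 2 * 1 := by simp
    _ ≤ 2 * _ := mul_le_mul_right adm 2
    _ = _ := by
      rw [← lintegral_const_mul' _ _ (by simp)]
      apply setLIntegral_congr_fun measurableSet_Icc
      intro s hs
      have hx : 0 < 1 - (1 - ε) * s := by nlinarith [hs.1, hs.2]
      have h : (1 - ε) / (2 * (1 - (1 - ε) * s)) = 2⁻¹ * ((1 - ε) * (1 - (1 - ε) * s)⁻¹) := by
        field_simp
      dsimp only
      rw [h, ENNReal.ofReal_mul (by norm_num), ENNReal.ofReal_mul hc.le, abs_neg, abs_of_pos hc,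
        ENNReal.ofReal_inv_of_pos (by norm_num : (0 : ℝ) < 2)]
      have h2 : (2 : ℝ≥0∞) * 2⁻¹ = 1 := ENNReal.mul_inv_cancel (by simp) (by simp)
      simp only [ENNReal.ofReal_ofNat]
      calc _ = (2 * 2⁻¹ : ℝ≥0∞) * (ENNReal.ofReal (1 - ε) * (g (1 - (1 - ε) * s) *
            ENNReal.ofReal (1 - (1 - ε) * s)⁻¹)) := by ring
        _ = _ := by rw [h2, one_mul]

/-- Hölder's inequality with exponents `4` and `4/3` on a single vertical segment. -/
lemma fibre_bound (ε : ℝ) (hε : 0 < ε) (hε1 : ε < 1) (g : ℝ → ℝ≥0∞) (hg : Measurable g)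
    (h2 : 2 ≤ ∫⁻ x in Set.Icc ε 1, g x * ENNReal.ofReal x⁻¹) :
    16 / 27 ≤ ∫⁻ x in Set.Icc ε 1, g x ^ 4 * ENNReal.ofReal (x⁻¹ ^ 2) := by
  set I := ∫⁻ x in Set.Icc ε 1, g x ^ 4 * ENNReal.ofReal (x⁻¹ ^ 2) with hI
  have hpq : Real.HolderConjugate 4 (4 / 3) := by
    rw [Real.holderConjugate_iff]; norm_num
  have hm : Measurable fun x : ℝ => ENNReal.ofReal (x ^ (-(1 / 2) : ℝ)) := by fun_prop
  have H := ENNReal.lintegral_mul_le_Lp_mul_Lq (volume.restrict (Set.Icc ε 1)) hpq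
    (f := fun x => g x * ENNReal.ofReal (x ^ (-(1 / 2) : ℝ)))
    (g := fun x => ENNReal.ofReal (x ^ (-(1 / 2) : ℝ)))
    (hg.mul hm).aemeasurable hm.aemeasurable
  have e1 : ∫⁻ x in Set.Icc ε 1, ((fun x => g x * ENNReal.ofReal (x ^ (-(1 / 2) : ℝ))) *
      fun x => ENNReal.ofReal (x ^ (-(1 / 2) : ℝ))) x
      = ∫⁻ x in Set.Icc ε 1, g x * ENNReal.ofReal x⁻¹ := by
    apply setLIntegral_congr_fun measurableSet_Icc
    intro x hx
    have hx0 : 0 < x := by linarith [hx.1]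
    simp only [Pi.mul_apply]
    rw [mul_assoc, ← ENNReal.ofReal_mul (by positivity), ← Real.rpow_add hx0, ← Real.rpow_neg_one]
    norm_num
  have e2 : ∫⁻ x in Set.Icc ε 1, (g x * ENNReal.ofReal (x ^ (-(1 / 2) : ℝ))) ^ (4 : ℝ) = I := by
    apply setLIntegral_congr_fun measurableSet_Icc
    intro x hx
    have hx0 : 0 < x := by linarith [hx.1]
    dsimp only
    rw [ENNReal.mul_rpow_of_nonneg _ _ (by norm_num),
      ENNReal.ofReal_rpow_of_pos (by positivity), ← Real.rpow_mul hx0.le, ← Real.rpow_neg_one,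
      ← Real.rpow_natCast, ← Real.rpow_mul hx0.le, ← ENNReal.rpow_natCast]
    norm_num
  have e3 : ∫⁻ x in Set.Icc ε 1, (ENNReal.ofReal (x ^ (-(1 / 2) : ℝ))) ^ (4 / 3 : ℝ) ≤ 3 := by
    refine le_trans (le_of_eq ?_) (lintegral_rpow_neg_two_thirds_le ε hε hε1.le)
    apply setLIntegral_congr_fun measurableSet_Icc
    intro x hx
    have hx0 : 0 < x := by linarith [hx.1]
    dsimp only
    rw [ENNReal.ofReal_rpow_of_pos (by positivity), ← Real.rpow_mul hx0.le]
    norm_num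
  rw [e1, e2] at H
  have H2 : (2 : ℝ≥0∞) ≤ I ^ (1 / 4 : ℝ) * 3 ^ (1 / (4 / 3) : ℝ) :=
    (h2.trans H).trans (by gcongr)
  have H3 : (2 : ℝ≥0∞) ^ (4 : ℝ) ≤ (I ^ (1 / 4 : ℝ) * 3 ^ (1 / (4 / 3) : ℝ)) ^ (4 : ℝ) :=
    ENNReal.rpow_le_rpow H2 (by norm_num)
  rw [ENNReal.mul_rpow_of_nonneg _ _ (by norm_num), ← ENNReal.rpow_mul, ← ENNReal.rpow_mul] at H3
  have n1 : (1 / 4 * 4 : ℝ) = 1 := by norm_num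
  have n2 : (1 / (4 / 3) * 4 : ℝ) = (3 : ℕ) := by norm_num
  have n3 : (4 : ℝ) = (4 : ℕ) := by norm_num
  rw [n1, n2, n3, ENNReal.rpow_natCast, ENNReal.rpow_natCast, ENNReal.rpow_one] at H3
  apply ENNReal.div_le_of_le_mul
  norm_num at H3
  exact H3

/-- If `ρ : ℝ³ → [0,∞]` is admissible along each of the horizontal curves
`γ(s) = (a, 1 - (1 - 1/n)s, t)`, `a,t ∈ [-1,1]` (line integral against the horizontal
speed `(1 - 1/n)/(2(1 - (1 - 1/n)s))` at least 1), then the 4-energy of `ρ` with respect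
to the Haar measure `λ⁻² da dλ dt` of the affine-additive group is at least
`2⁴/3³ = 16/27`; in particular the 4-modulus of the family of horizontal curves joining
`E = {(a,1,t) : a,t ∈ [-1,1]}` to `F_n = {(a,1/n,t) : a,t ∈ [-1,1]}` is at least `16/27`,
uniformly in `n`. -/
theorem stmt9 (n : ℕ) (hn : 2 ≤ n) (ρ : ℝ × ℝ × ℝ → ℝ≥0∞) (hρ : Measurable ρ)
    (adm : ∀ a ∈ Set.Icc (-1 : ℝ) 1, ∀ t ∈ Set.Icc (-1 : ℝ) 1,
      1 ≤ ∫⁻ s in Set.Icc (0 : ℝ) 1,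
        ρ (a, 1 - (1 - (n : ℝ)⁻¹) * s, t) *
          ENNReal.ofReal ((1 - (n : ℝ)⁻¹) / (2 * (1 - (1 - (n : ℝ)⁻¹) * s)))) :
    (16 / 27 : ℝ≥0∞) ≤
      ∫⁻ p in {p : ℝ × ℝ × ℝ | 0 < p.2.1}, (ρ p) ^ 4 * ENNReal.ofReal (p.2.1⁻¹ ^ 2) := by
  have hn2 : (2 : ℝ) ≤ n := by exact_mod_cast hn
  have hε : 0 < (n : ℝ)⁻¹ := by positivity
  have hε1 : (n : ℝ)⁻¹ < 1 := inv_lt_one_of_one_lt₀ (by linarith)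
  generalize (n : ℝ)⁻¹ = ε at *
  have hF : Measurable fun p : ℝ × ℝ × ℝ => (ρ p) ^ 4 * ENNReal.ofReal (p.2.1⁻¹ ^ 2) := by
    fun_prop
  have hsub : Set.Icc (-1 : ℝ) 1 ×ˢ (Set.Icc ε 1 ×ˢ Set.Icc (-1 : ℝ) 1) ⊆
      {p : ℝ × ℝ × ℝ | 0 < p.2.1} := fun p hp => hε.trans_le hp.2.1.1
  refine le_trans ?_ (lintegral_mono_set hsub)
  rw [Measure.volume_eq_prod, ← Measure.prod_restrict, lintegral_prod _ hF.aemeasurable]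
  have key : ∀ a ∈ Set.Icc (-1 : ℝ) 1, (16 / 27 : ℝ≥0∞) * 2 ≤
      ∫⁻ q in Set.Icc ε 1 ×ˢ Set.Icc (-1 : ℝ) 1, (ρ (a, q)) ^ 4 * ENNReal.ofReal (q.1⁻¹ ^ 2) := by
    intro a ha
    rw [Measure.volume_eq_prod, ← Measure.prod_restrict,
      lintegral_prod_symm _ (by fun_prop)]
    calc (16 / 27 : ℝ≥0∞) * 2 = ∫⁻ _ in Set.Icc (-1 : ℝ) 1, (16 / 27 : ℝ≥0∞) := by
          rw [setLIntegral_const, Real.volume_Icc]; norm_num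
      _ ≤ _ := by
          apply setLIntegral_mono' measurableSet_Icc
          intro t ht
          exact fibre_bound ε hε hε1 (fun x => ρ (a, x, t)) (by fun_prop)
            (two_le_of_admissible ε hε hε1 (fun x => ρ (a, x, t)) (adm a ha t ht))
  calc (16 / 27 : ℝ≥0∞) = 16 / 27 * 1 := by rw [mul_one]
    _ ≤ 16 / 27 * (2 * 2) := by gcongr; norm_num
    _ = ∫⁻ _ in Set.Icc (-1 : ℝ) 1, (16 / 27 : ℝ≥0∞) * 2 := by
        rw [setLIntegral_const, Real.volume_Icc, ← mul_assoc]; norm_num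
    _ ≤ _ := setLIntegral_mono' measurableSet_Icc key
end

section
/- Let n > 1 be a real number and let λ, t : [0,1] → ℝ be continuously differentiable functions with λ(s) > 0 for all s, λ(0) = 1 and λ(1) = 1/n. Then the horizontal length satisfies ∫₀¹ √(λ'(s)² + t'(s)²) / (2λ(s)) ds ≥ (ln n)/2. In particular, in the affine-additive group the sub-Riemannian distance between the compact sets E = {(a,1,t) : a,t ∈ [-1,1]} and F_n = {(a,1/n,t) : a,t ∈ [-1,1]} is at least (ln n)/2, so dist(E, F_n) → ∞ as n → ∞. -/
/-!
Discarding the `t'` term, the integrand is at least `-λ' / (2λ)`, which is the derivative of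
`-(log λ) / 2`. By the fundamental theorem of calculus this lower bound integrates to
`(log λ(0) - log λ(1)) / 2 = (log n) / 2`.
-/

/-- If `λ, t : [0,1] → ℝ` are continuously differentiable, `λ > 0` on `[0,1]`,
`λ(0) = 1` and `λ(1) = 1/n` for a real number `n > 1`, then the horizontal length
`∫₀¹ √(λ'(s)² + t'(s)²)/(2λ(s)) ds` is at least `(ln n)/2`. In particular, in the
affine-additive group the sub-Riemannian distance between `E = {(a,1,t) : a,t ∈ [-1,1]}`
and `F_n = {(a,1/n,t) : a,t ∈ [-1,1]}` is at least `(ln n)/2 → ∞`. -/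
theorem stmt13 (n : ℝ) (hn : 1 < n) (lam t lam' t' : ℝ → ℝ)
    (hlam : ∀ s ∈ Set.Icc (0 : ℝ) 1, HasDerivAt lam (lam' s) s)
    (ht : ∀ s ∈ Set.Icc (0 : ℝ) 1, HasDerivAt t (t' s) s)
    (hlam' : ContinuousOn lam' (Set.Icc 0 1))
    (ht' : ContinuousOn t' (Set.Icc 0 1))
    (hpos : ∀ s ∈ Set.Icc (0 : ℝ) 1, 0 < lam s)
    (h0 : lam 0 = 1) (h1 : lam 1 = 1 / n) :
    Real.log n / 2 ≤ ∫ s in (0 : ℝ)..1, Real.sqrt (lam' s ^ 2 + t' s ^ 2) / (2 * lam s) := by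
  have hlamc : ContinuousOn lam (Set.Icc 0 1) :=
    fun s hs => (hlam s hs).continuousAt.continuousWithinAt
  have hne : ∀ s ∈ Set.Icc (0 : ℝ) 1, 2 * lam s ≠ 0 :=
    fun s hs => (mul_pos two_pos (hpos s hs)).ne'
  have hcont : ContinuousOn (fun s => -lam' s / (2 * lam s)) (Set.Icc 0 1) :=
    hlam'.neg.div (continuousOn_const.mul hlamc) hne
  have hcont' : ContinuousOn (fun s => Real.sqrt (lam' s ^ 2 + t' s ^ 2) / (2 * lam s))
      (Set.Icc 0 1) :=
    ((hlam'.pow 2).add (ht'.pow 2)).sqrt.div (continuousOn_const.mul hlamc) hne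
  have hint := hcont.intervalIntegrable_of_Icc (μ := MeasureTheory.volume) zero_le_one
  have hint' := hcont'.intervalIntegrable_of_Icc (μ := MeasureTheory.volume) zero_le_one
  have hderiv : ∀ s ∈ Set.uIcc (0 : ℝ) 1,
      HasDerivAt (fun s => -Real.log (lam s) / 2) (-lam' s / (2 * lam s)) s := by
    intro s hs
    rw [Set.uIcc_of_le zero_le_one] at hs
    have hs0 := (hpos s hs).ne'
    refine (((hlam s hs).log hs0).neg.div_const 2).congr_deriv ?_
    field_simp
  have hFTC := intervalIntegral.integral_eq_sub_of_hasDerivAt hderiv hint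
  calc Real.log n / 2 = ∫ s in (0 : ℝ)..1, -lam' s / (2 * lam s) := by
        rw [hFTC, h0, h1, one_div, Real.log_inv, Real.log_one]
        ring
    _ ≤ _ := by
        refine intervalIntegral.integral_mono_on zero_le_one hint hint' fun s hs => ?_
        refine div_le_div_of_nonneg_right (Real.le_sqrt_of_sq_le ?_)
          (mul_pos two_pos (hpos s hs)).le
        nlinarith [sq_nonneg (t' s)]
end

section
/- The map f : ℝ × (0,∞) × ℝ → ℝ³ defined by f(a,λ,t) = (-√λ cos a, √λ sin a, t) satisfies the contact property f*ϑ_ℍ = 2λ ϑ: for every p = (a,λ,t) with λ > 0 and every v = (v_a, v_λ, v_t) ∈ ℝ³, writing w = Df(p)(v) and (x,y,τ) = f(p), one has w_τ + 2x w_y - 2y w_x = 2λ (v_t/(2λ) - v_a) = v_t - 2λ v_a. -/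
/-!
With `s = √λ`, the product rule gives `w_x = -ds cos a + s sin a v_a` and
`w_y = ds sin a + s cos a v_a`, where `ds = v_λ / (2√λ)`. In `2x w_y - 2y w_x` the terms with `ds`
cancel, and `sin² a + cos² a = 1` turns the rest into `-2 s² v_a = -2λ v_a`.
-/

/-- The map `f(a,λ,t) = (-√λ cos a, √λ sin a, t)` from the affine-additive group to the
Heisenberg group. -/
noncomputable def f (p : ℝ × ℝ × ℝ) : ℝ × ℝ × ℝ :=
  (-Real.sqrt p.2.1 * Real.cos p.1, Real.sqrt p.2.1 * Real.sin p.1, p.2.2)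

/-- The contact property `f*ϑ_ℍ = 2λ ϑ`: for every `p = (a,λ,t)` with `λ > 0` and every
vector `v = (v_a,v_λ,v_t)`, writing `w = Df(p)(v)` and `(x,y,τ) = f(p)`, one has
`w_τ + 2x w_y - 2y w_x = 2λ (v_t/(2λ) - v_a) = v_t - 2λ v_a`. -/
theorem stmt14 (p : ℝ × ℝ × ℝ) (hp : 0 < p.2.1) (v : ℝ × ℝ × ℝ) :
    (fderiv ℝ f p v).2.2 + 2 * (f p).1 * (fderiv ℝ f p v).2.1 -
        2 * (f p).2.1 * (fderiv ℝ f p v).1 =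
      2 * p.2.1 * (v.2.2 / (2 * p.2.1) - v.1) ∧
    2 * p.2.1 * (v.2.2 / (2 * p.2.1) - v.1) = v.2.2 - 2 * p.2.1 * v.1 := by
  have ha : HasFDerivAt (fun q : ℝ × ℝ × ℝ => q.1) (ContinuousLinearMap.fst ℝ ℝ (ℝ × ℝ)) p :=
    hasFDerivAt_fst
  have hl : HasFDerivAt (fun q : ℝ × ℝ × ℝ => q.2.1)
      ((ContinuousLinearMap.fst ℝ ℝ ℝ).comp (ContinuousLinearMap.snd ℝ ℝ (ℝ × ℝ))) p :=
    hasFDerivAt_fst.comp p hasFDerivAt_snd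
  have ht : HasFDerivAt (fun q : ℝ × ℝ × ℝ => q.2.2)
      ((ContinuousLinearMap.snd ℝ ℝ ℝ).comp (ContinuousLinearMap.snd ℝ ℝ (ℝ × ℝ))) p :=
    hasFDerivAt_snd.comp p hasFDerivAt_snd
  -- `λ > 0` makes the square root differentiable at `p`; otherwise `fderiv` would be a junk value.
  have hs := hl.sqrt hp.ne'
  have hf : HasFDerivAt f _ p := (hs.neg.mul ha.cos).prodMk ((hs.mul ha.sin).prodMk ht)
  have hsq := Real.sq_sqrt hp.le
  have htrig := Real.sin_sq_add_cos_sq p.1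
  have hcancel : 2 * p.2.1 * (v.2.2 / (2 * p.2.1) - v.1) = v.2.2 - 2 * p.2.1 * v.1 := by
    field_simp
  refine ⟨?_, hcancel⟩
  rw [hcancel, hf.fderiv]
  simp [f]
  -- The `v_λ` terms cancel, and the rest is `-2 (√λ)² (sin² a + cos² a) v_a`.
  linear_combination (-2 * v.1 * Real.sqrt p.2.1 ^ 2) * htrig - 2 * v.1 * hsq
end

section
/- For every point p = (a,λ,t) with λ > 0, writing (x,y,τ) = f(p) = (-√λ cos a, √λ sin a, t), the derivative of f pushes the horizontal frame of the affine-additive group to horizontal vectors of the Heisenberg group according to: Df(p)(U(p)) = y·X(f(p)) - x·Y(f(p)) = (y, -x, 2λ) and Df(p)(V(p)) = x·X(f(p)) + y·Y(f(p)) = (x, y, 0), where U(a,λ,t) = (1,0,2λ), V(a,λ,t) = (0,2λ,0) are the horizontal vector fields of AA and X(x,y,t) = (1,0,2y), Y(x,y,t) = (0,1,-2x) are the horizontal vector fields of ℍ. -/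
/-- The horizontal vector field `U = ∂_a + 2λ∂_t` of the affine-additive group. -/
def U (p : ℝ × ℝ × ℝ) : ℝ × ℝ × ℝ := (1, 0, 2 * p.2.1)

/-- The horizontal vector field `V = 2λ∂_λ` of the affine-additive group. -/
def V (p : ℝ × ℝ × ℝ) : ℝ × ℝ × ℝ := (0, 2 * p.2.1, 0)

/-- The horizontal vector field `X = ∂_x + 2y∂_t` of the Heisenberg group. -/
def X (q : ℝ × ℝ × ℝ) : ℝ × ℝ × ℝ := (1, 0, 2 * q.2.1)

/-- The horizontal vector field `Y = ∂_y - 2x∂_t` of the Heisenberg group. -/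
def Y (q : ℝ × ℝ × ℝ) : ℝ × ℝ × ℝ := (0, 1, -2 * q.1)

theorem fderiv_f_apply (p : ℝ × ℝ × ℝ) (hp : 0 < p.2.1) (v : ℝ × ℝ × ℝ) :
    fderiv ℝ f p v =
      (√p.2.1 * Real.sin p.1 * v.1 - Real.cos p.1 / (2 * √p.2.1) * v.2.1,
        √p.2.1 * Real.cos p.1 * v.1 + Real.sin p.1 / (2 * √p.2.1) * v.2.1, v.2.2) := by
  have ha : HasFDerivAt (fun q : ℝ × ℝ × ℝ => q.1) (ContinuousLinearMap.fst ℝ ℝ (ℝ × ℝ)) p :=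
    hasFDerivAt_fst
  have hsnd : HasFDerivAt (fun q : ℝ × ℝ × ℝ => q.2) (ContinuousLinearMap.snd ℝ ℝ (ℝ × ℝ)) p :=
    hasFDerivAt_snd
  have hs := hsnd.fst.sqrt hp.ne'
  have hf : HasFDerivAt f _ p :=
    (hs.neg.mul ha.cos).prodMk ((hs.mul ha.sin).prodMk hsnd.snd)
  rw [hf.fderiv]
  ext <;> simp <;> ring

/-- For every `p = (a,λ,t)` with `λ > 0`, writing `(x,y,τ) = f(p)`, the derivative of `f`
pushes the horizontal frame of the affine-additive group to horizontal vectors of the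
Heisenberg group: `Df(p)(U(p)) = y·X(f(p)) - x·Y(f(p)) = (y, -x, 2λ)` and
`Df(p)(V(p)) = x·X(f(p)) + y·Y(f(p)) = (x, y, 0)`. -/
theorem stmt16 (p : ℝ × ℝ × ℝ) (hp : 0 < p.2.1) :
    fderiv ℝ f p (U p) = (f p).2.1 • X (f p) - (f p).1 • Y (f p) ∧
    fderiv ℝ f p (U p) = ((f p).2.1, -(f p).1, 2 * p.2.1) ∧
    fderiv ℝ f p (V p) = (f p).1 • X (f p) + (f p).2.1 • Y (f p) ∧
    fderiv ℝ f p (V p) = ((f p).1, (f p).2.1, 0) := by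
  have hs : √p.2.1 ≠ 0 := (Real.sqrt_pos.mpr hp).ne'
  have hsq : √p.2.1 ^ 2 = p.2.1 := Real.sq_sqrt hp.le
  have hU : fderiv ℝ f p (U p) = ((f p).2.1, -(f p).1, 2 * p.2.1) := by
    rw [fderiv_f_apply p hp]
    simp [U, f]
  have hV : fderiv ℝ f p (V p) = ((f p).1, (f p).2.1, 0) := by
    rw [fderiv_f_apply p hp]
    ext
    · simp only [V, f]
      field_simp
      linear_combination Real.cos p.1 * hsq
    · simp only [V, f]
      field_simp
      linear_combination -Real.sin p.1 * hsq
    · rfl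
  have hnorm : (f p).1 ^ 2 + (f p).2.1 ^ 2 = p.2.1 := by
    simp only [f]
    linear_combination √p.2.1 ^ 2 * Real.sin_sq_add_cos_sq p.1 + hsq
  refine ⟨?_, hU, ?_, hV⟩
  · rw [hU]
    ext
    · simp [X, Y]
    · simp [X, Y]
    · simp only [X, Y, Prod.snd_sub, Prod.smul_snd, smul_eq_mul]
      linear_combination -2 * hnorm
  · rw [hV]
    ext
    · simp [X, Y]
    · simp [X, Y]
    · simp only [X, Y, Prod.snd_add, Prod.smul_snd, smul_eq_mul]
      ring
end

section
/- For every point p = (a,λ,t) with λ > 0 and all real α, β, writing (x,y) = (-√λ cos a, √λ sin a), the coefficients of Df(p)(α U(p) + β V(p)) in the horizontal frame X, Y of the Heisenberg group are (αy + βx, βy - αx), and they satisfy (αy + βx)² + (βy - αx)² = (α² + β²)(x² + y²) = (α² + β²) λ. Consequently, for every p the ratio max{‖Df(p)(αU+βV)‖_ℍ : α²+β² = 1} / min{‖Df(p)(αU+βV)‖_ℍ : α²+β² = 1} equals 1, i.e. the metric distortion H_f(p) of f equals 1 at every point; f is 1-quasiregular. -/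
/-- The horizontal norm of the image `Df(p)(αU(p) + βV(p))`: since a horizontal vector
`c₁X + c₂Y = (c₁, c₂, 2y c₁ - 2x c₂)` of the Heisenberg group has horizontal coefficients
equal to its first two components, `‖c₁X + c₂Y‖_ℍ = √(c₁² + c₂²)`. -/
noncomputable def hNorm (p : ℝ × ℝ × ℝ) (α β : ℝ) : ℝ :=
  Real.sqrt ((fderiv ℝ f p (α • U p + β • V p)).1 ^ 2 +
    (fderiv ℝ f p (α • U p + β • V p)).2.1 ^ 2)

/-- The derivative of `f` on a horizontal vector. Its last entry equals `2y c₁ - 2x c₂` for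
`c₁ = αy + βx` and `c₂ = βy - αx`, so the image is the horizontal vector `c₁X + c₂Y`. -/
lemma fderiv_f_horizontal (p : ℝ × ℝ × ℝ) (hp : 0 < p.2.1) (α β : ℝ) :
    fderiv ℝ f p (α • U p + β • V p) =
      (α * (f p).2.1 + β * (f p).1, β * (f p).2.1 - α * (f p).1, 2 * α * p.2.1) := by
  have h1 : HasFDerivAt (fun q : ℝ × ℝ × ℝ => q.1) (ContinuousLinearMap.fst ℝ ℝ (ℝ × ℝ)) p :=
    hasFDerivAt_fst
  have h2 : HasFDerivAt (fun q : ℝ × ℝ × ℝ => q.2) (ContinuousLinearMap.snd ℝ ℝ (ℝ × ℝ)) p :=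
    hasFDerivAt_snd
  have hs := h2.fst.sqrt hp.ne'
  have hf : HasFDerivAt f _ p := (hs.neg.mul h1.cos).prodMk ((hs.mul h1.sin).prodMk h2.snd)
  have hsq : Real.sqrt p.2.1 ≠ 0 := (Real.sqrt_pos.mpr hp).ne'
  have hl : Real.sqrt p.2.1 ^ 2 = p.2.1 := Real.sq_sqrt hp.le
  rw [hf.fderiv]
  ext
  · simp [f, U, V]
    field_simp
    rw [hl]
    ring
  · simp [f, U, V]
    field_simp
    rw [hl]
    ring
  · simp [U, V]
    ring

lemma f_sq_add_sq (p : ℝ × ℝ × ℝ) (hp : 0 < p.2.1) :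
    (f p).1 ^ 2 + (f p).2.1 ^ 2 = p.2.1 := by
  have hl : Real.sqrt p.2.1 ^ 2 = p.2.1 := Real.sq_sqrt hp.le
  simp only [f]
  linear_combination Real.sqrt p.2.1 ^ 2 * Real.sin_sq_add_cos_sq p.1 + hl

/-- `Df(p)` is conformal on the horizontal plane: it scales the unit circle by `√λ`. -/
lemma hNorm_of_unit (p : ℝ × ℝ × ℝ) (hp : 0 < p.2.1) (α β : ℝ) (h : α ^ 2 + β ^ 2 = 1) :
    hNorm p α β = Real.sqrt p.2.1 := by
  simp only [hNorm, fderiv_f_horizontal p hp]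
  congr 1
  linear_combination (α ^ 2 + β ^ 2) * f_sq_add_sq p hp + p.2.1 * h

/-- For every `p = (a,λ,t)` with `λ > 0` and all `α, β ∈ ℝ`, writing
`(x,y) = (-√λ cos a, √λ sin a)`, the coefficients of `Df(p)(αU(p) + βV(p))` in the
horizontal frame `X, Y` of the Heisenberg group are `(αy + βx, βy - αx)`, and
`(αy + βx)² + (βy - αx)² = (α² + β²)(x² + y²) = (α² + β²)λ`. Consequently the ratio
`max{‖Df(p)(αU+βV)‖_ℍ : α²+β²=1} / min{‖Df(p)(αU+βV)‖_ℍ : α²+β²=1}` equals `1`: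
the metric distortion `H_f(p)` equals `1` at every point, i.e. `f` is 1-quasiregular. -/
theorem stmt17 (p : ℝ × ℝ × ℝ) (hp : 0 < p.2.1) :
    (∀ α β : ℝ,
      (fderiv ℝ f p (α • U p + β • V p)).1 = α * (f p).2.1 + β * (f p).1 ∧
      (fderiv ℝ f p (α • U p + β • V p)).2.1 = β * (f p).2.1 - α * (f p).1 ∧
      (α * (f p).2.1 + β * (f p).1) ^ 2 + (β * (f p).2.1 - α * (f p).1) ^ 2 =
          (α ^ 2 + β ^ 2) * ((f p).1 ^ 2 + (f p).2.1 ^ 2) ∧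
      (α ^ 2 + β ^ 2) * ((f p).1 ^ 2 + (f p).2.1 ^ 2) = (α ^ 2 + β ^ 2) * p.2.1) ∧
    sSup {r : ℝ | ∃ α β : ℝ, α ^ 2 + β ^ 2 = 1 ∧ r = hNorm p α β} /
        sInf {r : ℝ | ∃ α β : ℝ, α ^ 2 + β ^ 2 = 1 ∧ r = hNorm p α β} = 1 := by
  refine ⟨fun α β => ⟨?_, ?_, by ring, by rw [f_sq_add_sq p hp]⟩, ?_⟩
  · rw [fderiv_f_horizontal p hp]
  · rw [fderiv_f_horizontal p hp]
  · have hset : {r : ℝ | ∃ α β : ℝ, α ^ 2 + β ^ 2 = 1 ∧ r = hNorm p α β} =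
        {Real.sqrt p.2.1} := by
      ext r
      constructor
      · rintro ⟨α, β, h, rfl⟩
        exact hNorm_of_unit p hp α β h
      · rintro rfl
        exact ⟨1, 0, by norm_num, (hNorm_of_unit p hp 1 0 (by norm_num)).symm⟩
    rw [hset, csSup_singleton, csInf_singleton]
    exact div_self (Real.sqrt_pos.mpr hp).ne'
end
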